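/- The operation ↓ is functorial on Int(Rel): for all Int(Rel) morphisms R : (A⁺,A⁻)→(B⁺,B⁻) and S : (B⁺,B⁻)→(C⁺,C⁻), one has ↓(S∘R) = (↓S)∘(↓R) with respect to the Int(Rel) composition, and ↓Id = Id. -/

import Mathlib

namespace IntRel

/-- A relation from `α` to `β`. -/
abbrev Rel' (α β : Type) : Type := α → β → Prop

/-- Right-to-left composition of relations: `(rcomp S R) a c` iff `∃ b, R a b ∧ S b c`. -/
def rcomp {α β γ : Type} (S : Rel' β γ) (R : Rel' α β) : Rel' α γ :=
  fun a c => ∃ b, R a b ∧ S b c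

/-- Reflexive–transitive closure of an endorelation. -/
def rstar {α : Type} (h : Rel' α α) : Rel' α α := Relation.ReflTransGen h

/-- Image `R[X]` of a subset under a relation. -/
def img {α β : Type} (R : Rel' α β) (X : Set α) : Set β := {b | ∃ a ∈ X, R a b}

/-- Preimage `[Y]R` of a subset under a relation. -/
def pre {α β : Type} (R : Rel' α β) (Y : Set β) : Set α := {a | ∃ b ∈ Y, R a b}

/-- Identity relation. -/
def idRel (α : Type) : Rel' α α := fun a b => a = b

/-- Empty relation. -/
def emptyRel (α β : Type) : Rel' α β := fun _ _ => False

/-- Disjoint union of relations, acting componentwise. -/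
def sumRel {α β γ δ : Type} (f : Rel' α γ) (g : Rel' β δ) : Rel' (α ⊕ β) (γ ⊕ δ) :=
  fun x y =>
    match x, y with
    | .inl a, .inl c => f a c
    | .inr b, .inr d => g b d
    | _, _ => False

/-- Disjoint union of subsets. -/
def sumSet {α β : Type} (X : Set α) (Y : Set β) : Set (α ⊕ β) :=
  fun z => match z with
    | .inl a => a ∈ X
    | .inr b => b ∈ Y

variable {Ap Am Bp Bm Cp Cm Dp Dm : Type}

/-- Component `R₁₂ : A⁺ → B⁺` of an Int(Rel) morphism. -/
def c12 (R : Rel' (Ap ⊕ Bm) (Bp ⊕ Am)) : Rel' Ap Bp := fun a b => R (.inl a) (.inl b)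
/-- Component `R₁₁ : A⁺ → A⁻` of an Int(Rel) morphism. -/
def c11 (R : Rel' (Ap ⊕ Bm) (Bp ⊕ Am)) : Rel' Ap Am := fun a a' => R (.inl a) (.inr a')
/-- Component `R₂₂ : B⁻ → B⁺` of an Int(Rel) morphism. -/
def c22 (R : Rel' (Ap ⊕ Bm) (Bp ⊕ Am)) : Rel' Bm Bp := fun b' b => R (.inr b') (.inl b)
/-- Component `R₂₁ : B⁻ → A⁻` of an Int(Rel) morphism. -/
def c21 (R : Rel' (Ap ⊕ Bm) (Bp ⊕ Am)) : Rel' Bm Am := fun b' a' => R (.inr b') (.inr a')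

/-- Composition in Int(Rel), given by the star (execution) formula. -/
def IntComp (S : Rel' (Bp ⊕ Cm) (Cp ⊕ Bm)) (R : Rel' (Ap ⊕ Bm) (Bp ⊕ Am)) :
    Rel' (Ap ⊕ Cm) (Cp ⊕ Am) :=
  fun x y =>
    match x, y with
    | .inl a, .inl c =>
        rcomp (c12 S) (rcomp (rstar (rcomp (c22 R) (c11 S))) (c12 R)) a c
    | .inl a, .inr a' =>
        c11 R a a' ∨
          rcomp (c21 R) (rcomp (c11 S) (rcomp (rstar (rcomp (c22 R) (c11 S))) (c12 R))) a a'
    | .inr c', .inl c =>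
        c22 S c' c ∨
          rcomp (c12 S) (rcomp (c22 R) (rcomp (rstar (rcomp (c11 S) (c22 R))) (c21 S))) c' c
    | .inr c', .inr a' =>
        rcomp (c21 R) (rcomp (rstar (rcomp (c11 S) (c22 R))) (c21 S)) c' a'

/-- The identity Int(Rel) morphism on `(A⁺, A⁻)`. -/
def IdInt (Ap Am : Type) : Rel' (Ap ⊕ Am) (Ap ⊕ Am) :=
  fun x y =>
    match x, y with
    | .inl a, .inl a2 => a = a2
    | .inr a', .inr a2 => a' = a2
    | _, _ => False

/-- `R` is a positive map between the indicated multipointed objects. -/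
def IsPos (R : Rel' (Ap ⊕ Bm) (Bp ⊕ Am)) (mAp : Set Ap) (mAm : Set Am)
    (mBp : Set Bp) (mBm : Set Bm) : Prop :=
  pre (c12 R) mBp = mAp ∧ img (c21 R) mBm = mAm ∧
    pre (c22 R) mBp = ∅ ∧ img (c22 R) mBm = ∅

/-- `R` is a negative map between the indicated multipointed objects. -/
def IsNeg (R : Rel' (Ap ⊕ Bm) (Bp ⊕ Am)) (mAp : Set Ap) (mAm : Set Am)
    (mBp : Set Bp) (mBm : Set Bm) : Prop :=
  img (c12 R) mAp = mBp ∧ pre (c21 R) mAm = mBm ∧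
    pre (c11 R) mAm = ∅ ∧ img (c11 R) mAp = ∅


/-- The Int(Rel) morphism `↓R`: `(↓R)₁₂ = R₁₂ ⊕ {(⋆,⋆)}`, `(↓R)₂₁ = R₂₁ ⊕ {(⋆,⋆)}`,
`(↓R)₁₁ = R₁₁` embedded, `(↓R)₂₂ = R₂₂` embedded. -/
def downM (R : Rel' (Ap ⊕ Bm) (Bp ⊕ Am)) :
    Rel' ((Ap ⊕ Unit) ⊕ (Bm ⊕ Unit)) ((Bp ⊕ Unit) ⊕ (Am ⊕ Unit)) :=
  fun x y =>
    match x, y with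
    | .inl (.inl a), .inl (.inl b) => R (.inl a) (.inl b)
    | .inl (.inr _), .inl (.inr _) => True
    | .inl (.inl a), .inr (.inl a') => R (.inl a) (.inr a')
    | .inr (.inl b'), .inl (.inl b) => R (.inr b') (.inl b)
    | .inr (.inl b'), .inr (.inl a') => R (.inr b') (.inr a')
    | .inr (.inr _), .inr (.inr _) => True
    | _, _ => False

/-- An endorelation on `X ⊕ Unit` that is `h` embedded has the star of `h`, plus the identity
on the extra point. -/
theorem rstar_emb {X : Type} {h : Rel' X X} {k : Rel' (X ⊕ Unit) (X ⊕ Unit)}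
    (h1 : ∀ a b, k (.inl a) (.inl b) ↔ h a b) (h2 : ∀ u y, ¬ k (.inr u) y)
    (h3 : ∀ x u, ¬ k x (.inr u)) (x y : X ⊕ Unit) :
    rstar k x y ↔ sumRel (rstar h) (fun _ _ => True) x y := by
  constructor
  · intro H
    induction H with
    | refl =>
      rcases x with a | u
      · exact Relation.ReflTransGen.refl
      · trivial
    | @tail b c _ hbc ih =>
      rcases b with b | u
      · rcases c with c | u
        · rcases x with a | u
          · exact Relation.ReflTransGen.tail ih ((h1 _ _).1 hbc)
          · exact ih.elim
        · exact (h3 _ _ hbc).elim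
      · exact (h2 _ _ hbc).elim
  · rcases x with a | u <;> rcases y with b | v <;> intro H
    · exact Relation.ReflTransGen.lift Sum.inl (fun a b hab => (h1 a b).2 hab) _ _ H
    · exact H.elim
    · exact H.elim
    · exact Relation.ReflTransGen.refl

theorem rstar_down1 (R : Rel' (Ap ⊕ Bm) (Bp ⊕ Am)) (S : Rel' (Bp ⊕ Cm) (Cp ⊕ Bm)) :
    rstar (rcomp (c22 (downM R)) (c11 (downM S))) =
      sumRel (rstar (rcomp (c22 R) (c11 S))) (fun _ _ => True) := by
  funext x y
  refine propext (rstar_emb ?_ ?_ ?_ x y)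
  · intro a b; simp [rcomp, c22, c11, downM]
  · intro u y; simp [rcomp, c22, c11, downM]
  · intro x u; simp [rcomp, c22, c11, downM]

theorem rstar_down2 (R : Rel' (Ap ⊕ Bm) (Bp ⊕ Am)) (S : Rel' (Bp ⊕ Cm) (Cp ⊕ Bm)) :
    rstar (rcomp (c11 (downM S)) (c22 (downM R))) =
      sumRel (rstar (rcomp (c11 S) (c22 R))) (fun _ _ => True) := by
  funext x y
  refine propext (rstar_emb ?_ ?_ ?_ x y)
  · intro a b; simp [rcomp, c22, c11, downM]
  · intro u y; simp [rcomp, c22, c11, downM]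
  · intro x u; simp [rcomp, c22, c11, downM]

/-- `↓` is functorial on Int(Rel). -/
theorem down_functorial (Ap Am Bp Bm Cp Cm : Type)
    (R : Rel' (Ap ⊕ Bm) (Bp ⊕ Am)) (S : Rel' (Bp ⊕ Cm) (Cp ⊕ Bm)) :
    downM (IntComp S R) = IntComp (downM S) (downM R) ∧
    downM (IdInt Ap Am) = IdInt (Ap ⊕ Unit) (Am ⊕ Unit) := by
  constructor
  · funext x y
    rcases x with (a | u) | (c | u) <;> rcases y with (c' | v) | (a' | v) <;>
      simp only [downM, IntComp, rstar_down1, rstar_down2] <;>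
      simp [rcomp, c11, c12, c21, c22, downM, sumRel]
  · funext x y
    rcases x with (a | u) | (c | u) <;> rcases y with (c' | v) | (a' | v) <;>
      simp [downM, IdInt]

end IntRel
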